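/- Suppose k ≥ 2 and Ω is nonempty. Let X be chosen uniformly at random from Ω and let Y be the (random) output of STEP on input X. Then for every colour c ∈ Fin k and every colour q ∈ Fin k \ {c}: Pr[Y(v) = q and X(u) = c] = Pr[X(u) = c]/(k−1). -/

import Mathlib

open scoped ENNReal

/-- The disagreement graph `Q_{σ(v),q}`: the set of vertices `x` for which there is a
path `v = w₀, …, w_t = x` in `G` all of whose vertices receive colour `σ v` or `q`. -/
def disagreeSet {V : Type*} {k : ℕ} (G : SimpleGraph V) (v : V)
    (σ : V → Fin k) (q : Fin k) : Set V :=
  {x | ∃ p : G.Walk v x, ∀ w ∈ p.support, σ w = σ v ∨ σ w = q}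

open Classical in
/-- The `q`-switching `H(σ,q)`: exchange the colours `σ v` and `q` on the disagreement
graph, leaving all other vertices unchanged. -/
noncomputable def switchColour {V : Type*} {k : ℕ} (G : SimpleGraph V) (v : V)
    (σ : V → Fin k) (q : Fin k) : V → Fin k := fun x =>
  if x ∈ disagreeSet G v σ q then
    if σ x = σ v then q else if σ x = q then σ v else σ x
  else σ x

/-- The set of proper `k`-colourings of `G`, as a finset. -/
noncomputable def colourings {V : Type*} [Fintype V] (G : SimpleGraph V) (k : ℕ) :
    Finset (V → Fin k) :=
  (Set.toFinite {σ : V → Fin k | ∀ x y, G.Adj x y → σ x ≠ σ y}).toFinset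

/-- The randomized procedure STEP: on a good colouring output it unchanged; on a bad
colouring pick `q` uniformly at random from `Fin k \ {σ v}` and output `H(σ,q)`. -/
noncomputable def stepPMF {V : Type*} {k : ℕ} (hk : 2 ≤ k) (G : SimpleGraph V)
    (v u : V) (σ : V → Fin k) : PMF (V → Fin k) :=
  if σ v = σ u then
    PMF.map (fun q => switchColour G v σ q)
      (PMF.uniformOfFinset (Finset.univ.erase (σ v))
        (by
          rw [← Finset.card_pos, Finset.card_erase_of_mem (Finset.mem_univ _),
            Finset.card_univ, Fintype.card_fin]
          omega))
  else PMF.pure σ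

theorem switchColour_self {V : Type*} {k : ℕ} (G : SimpleGraph V) (v : V)
    (σ : V → Fin k) (q : Fin k) : switchColour G v σ q v = q := by
  have h : v ∈ disagreeSet G v σ q := ⟨SimpleGraph.Walk.nil, by simp⟩
  simp [switchColour, h]

theorem card_symm {V : Type*} [Fintype V] {k : ℕ} (G : SimpleGraph V) (v u : V)
    (c q r : Fin k) (hq : q ≠ c) (hr : r ≠ c) :
    ((colourings G k).filter (fun σ => σ u = c ∧ σ v = q)).card =
    ((colourings G k).filter (fun σ => σ u = c ∧ σ v = r)).card := by
  refine Finset.card_bij' (fun σ _ x => Equiv.swap q r (σ x))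
    (fun σ _ x => Equiv.swap q r (σ x)) ?_ ?_ ?_ ?_
  · intro σ h
    simp only [colourings, Finset.mem_filter, Set.Finite.mem_toFinset, Set.mem_ofPred_eq] at h ⊢
    refine ⟨fun x y hxy he => h.1 x y hxy ((Equiv.swap q r).injective he), ?_, ?_⟩
    · rw [h.2.1, Equiv.swap_apply_of_ne_of_ne hq.symm hr.symm]
    · rw [h.2.2, Equiv.swap_apply_left]
  · intro σ h
    simp only [colourings, Finset.mem_filter, Set.Finite.mem_toFinset, Set.mem_ofPred_eq] at h ⊢
    refine ⟨fun x y hxy he => h.1 x y hxy ((Equiv.swap q r).injective he), ?_, ?_⟩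
    · rw [h.2.1, Equiv.swap_apply_of_ne_of_ne hq.symm hr.symm]
    · rw [h.2.2, Equiv.swap_apply_right]
  · intro σ h
    funext x
    simp
  · intro σ h
    funext x
    simp

theorem card_split {V : Type*} [Fintype V] {k : ℕ} (G : SimpleGraph V) (v u : V)
    (c q : Fin k) (hq : q ≠ c) :
    ((colourings G k).filter (fun σ => σ u = c)).card =
    ((colourings G k).filter (fun σ => σ u = c ∧ σ v = c)).card +
    (k - 1) * ((colourings G k).filter (fun σ => σ u = c ∧ σ v = q)).card := by
  rw [Finset.card_eq_sum_card_fiberwise (f := fun σ => σ v) (t := Finset.univ)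
    (by intro x _; simp)]
  rw [← Finset.add_sum_erase _ _ (Finset.mem_univ c)]
  simp only [Finset.filter_filter]
  congr 1
  rw [Finset.sum_congr rfl (fun r hr => card_symm G v u c r q (Finset.ne_of_mem_erase hr) hq)]
  simp

theorem step_prob {V : Type*} {k : ℕ} (hk : 2 ≤ k) (G : SimpleGraph V) (v u : V)
    (c q : Fin k) (hqc : q ≠ c) (σ : V → Fin k) :
    (PMF.map (fun τ => (σ, τ)) (stepPMF hk G v u σ)).toOuterMeasure
      {p : (V → Fin k) × (V → Fin k) | p.2 v = q ∧ p.1 u = c} =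
    (if σ u = c ∧ σ v = c then ((k - 1 : ℕ) : ℝ≥0∞)⁻¹ else 0) +
      (if σ u = c ∧ σ v = q then 1 else 0) := by
  classical
  rw [PMF.toOuterMeasure_map_apply]
  unfold stepPMF
  split_ifs with h1 h2 h3 h3 h3 h3 h3
  all_goals try (exfalso; grind)
  · rw [PMF.toOuterMeasure_map_apply, PMF.toOuterMeasure_uniformOfFinset_apply]
    have : (Finset.univ.erase (σ v)).filter (fun x => x ∈ (fun q => switchColour G v σ q) ⁻¹'
        ((fun τ => (σ, τ)) ⁻¹' {p : (V → Fin k) × (V → Fin k) | p.2 v = q ∧ p.1 u = c}))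
        = {q} := by
      ext x
      simp [switchColour_self]
      grind
    simp only [this]
    simp
  · rw [add_zero, PMF.toOuterMeasure_map_apply, PMF.toOuterMeasure_apply_eq_zero_iff]
    simp [Set.disjoint_left, switchColour_self]
    grind
  · simp [PMF.toOuterMeasure_pure_apply, h3]
  · simp [PMF.toOuterMeasure_pure_apply]
    grind

theorem stmt15 {V : Type*} [Fintype V] {k : ℕ} (hk : 2 ≤ k)
    (G : SimpleGraph V) (v u : V) (huv : u ≠ v) (hadj : ¬ G.Adj v u)
    (hΩ : (colourings G k).Nonempty) (c : Fin k) (q : Fin k) (hqc : q ≠ c) :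
    ((PMF.uniformOfFinset (colourings G k) hΩ).bind
        (fun σ => PMF.map (fun τ => (σ, τ)) (stepPMF hk G v u σ))).toOuterMeasure
      {p : (V → Fin k) × (V → Fin k) | p.2 v = q ∧ p.1 u = c} =
    (PMF.uniformOfFinset (colourings G k) hΩ).toOuterMeasure
      {σ : V → Fin k | σ u = c} / ((k : ℝ≥0∞) - 1) := by
  classical
  have hk1 : ((k : ℝ≥0∞) - 1) = ((k - 1 : ℕ) : ℝ≥0∞) := by simp
  have hne : ((k - 1 : ℕ) : ℝ≥0∞) ≠ 0 := by
    rw [Nat.cast_ne_zero]; omega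
  have hnt : ((k - 1 : ℕ) : ℝ≥0∞) ≠ ⊤ := ENNReal.natCast_ne_top _
  rw [PMF.toOuterMeasure_bind_apply, PMF.toOuterMeasure_uniformOfFinset_apply, hk1]
  simp only [step_prob hk G v u c q hqc, Set.mem_ofPred_eq]
  rw [tsum_eq_sum (s := colourings G k)
    (fun b hb => by rw [PMF.uniformOfFinset_apply_of_notMem _ hb, zero_mul])]
  rw [Finset.sum_congr rfl (fun σ hσ => by rw [PMF.uniformOfFinset_apply_of_mem _ hσ])]
  rw [← Finset.mul_sum, Finset.sum_add_distrib, ← Finset.sum_filter, ← Finset.sum_filter]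
  simp only [Finset.sum_const, nsmul_eq_mul, mul_one]
  have hs := card_split G v u c q hqc
  have hs' : (((colourings G k).filter (fun σ => σ u = c)).card : ℝ≥0∞) =
    ((colourings G k).filter (fun σ => σ u = c ∧ σ v = c)).card +
    ((k - 1 : ℕ) : ℝ≥0∞) * ((colourings G k).filter (fun σ => σ u = c ∧ σ v = q)).card := by
    exact_mod_cast hs
  have e : ((colourings G k).filter (fun σ => σ u = c)).card * ((k - 1 : ℕ) : ℝ≥0∞)⁻¹ =
    ((colourings G k).filter (fun σ => σ u = c ∧ σ v = c)).card * ((k - 1 : ℕ) : ℝ≥0∞)⁻¹ +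
    ((colourings G k).filter (fun σ => σ u = c ∧ σ v = q)).card := by
    rw [hs', add_mul, mul_right_comm, ENNReal.mul_inv_cancel hne hnt, one_mul]
  rw [← e, div_eq_mul_inv, div_eq_mul_inv]
  ring_nf
  try congr!
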